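/- (Exchange of first and second arguments.) Let Φ = (w₁,w₂) : Ω → Ω' be a biholomorphism between open subsets of ℂ² with inverse Ψ = (x,y) : Ω' → Ω, let D := ∂ₓw₁·∂ᵧw₂ − ∂ₓw₂·∂ᵧw₁ be the Jacobian of Φ, and suppose J(w₁,w₂) ≠ 0 on Ω (in the variables (x,y)) and J(x,y) ≠ 0 on Ω' (in the variables (w₁,w₂)). Then at every point of Ω the column vector ({w₁,w₂;x,y}ₓ, {w₁,w₂;x,y}ᵧ, [w₁,w₂;x,y]ₓ, [w₁,w₂;x,y]ᵧ)ᵀ equals −(1/D)·M(w₁,w₂;x,y) applied to the column vector ({x,y;w₁,w₂}_{w₁}, {x,y;w₁,w₂}_{w₂}, [x,y;w₁,w₂]_{w₁}, [x,y;w₁,w₂]_{w₂})ᵀ of the four GL(3) derivatives of the inverse map, evaluated at Φ(x,y). -/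

import Mathlib

open Complex Matrix

noncomputable section

/-- Partial derivative in the first complex variable. -/
def pdx (f : ℂ × ℂ → ℂ) (p : ℂ × ℂ) : ℂ := deriv (fun x => f (x, p.2)) p.1

/-- Partial derivative in the second complex variable. -/
def pdy (f : ℂ × ℂ → ℂ) (p : ℂ × ℂ) : ℂ := deriv (fun y => f (p.1, y)) p.2

/-- The Jacobian `J(u₁,u₂) = ∂ₓu₁·∂ᵧu₂ − ∂ₓu₂·∂ᵧu₁`. -/
def Jac (u₁ u₂ : ℂ × ℂ → ℂ) (p : ℂ × ℂ) : ℂ :=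
  pdx u₁ p * pdy u₂ p - pdx u₂ p * pdy u₁ p

/-- The GL(3) derivative `{u₁,u₂;x,y}ₓ`. -/
def brX (u₁ u₂ : ℂ × ℂ → ℂ) (p : ℂ × ℂ) : ℂ :=
  (pdx u₁ p * pdx (pdx u₂) p - pdx u₂ p * pdx (pdx u₁) p) / Jac u₁ u₂ p

/-- The GL(3) derivative `{u₁,u₂;x,y}ᵧ`. -/
def brY (u₁ u₂ : ℂ × ℂ → ℂ) (p : ℂ × ℂ) : ℂ :=
  -(pdy u₁ p * pdy (pdy u₂) p - pdy u₂ p * pdy (pdy u₁) p) / Jac u₁ u₂ p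

/-- The GL(3) derivative `[u₁,u₂;x,y]ₓ`. -/
def sqX (u₁ u₂ : ℂ × ℂ → ℂ) (p : ℂ × ℂ) : ℂ :=
  ((pdy u₁ p * pdx (pdx u₂) p - pdy u₂ p * pdx (pdx u₁) p)
      + 2 * (pdx u₁ p * pdx (pdy u₂) p - pdx u₂ p * pdx (pdy u₁) p)) / Jac u₁ u₂ p

/-- The GL(3) derivative `[u₁,u₂;x,y]ᵧ`. -/
def sqY (u₁ u₂ : ℂ × ℂ → ℂ) (p : ℂ × ℂ) : ℂ :=
  -((pdx u₁ p * pdy (pdy u₂) p - pdx u₂ p * pdy (pdy u₁) p)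
      + 2 * (pdy u₁ p * pdx (pdy u₂) p - pdy u₂ p * pdx (pdy u₁) p)) / Jac u₁ u₂ p

/-- The 4×4 matrix `M(w₁,w₂;x,y)` built from the first partial derivatives of
the holomorphic map `(w₁,w₂)`. -/
def Mmat (w₁ w₂ : ℂ × ℂ → ℂ) (p : ℂ × ℂ) : Matrix (Fin 4) (Fin 4) ℂ :=
  !![(pdx w₁ p) ^ 3, -(pdx w₂ p) ^ 3, (pdx w₁ p) ^ 2 * pdx w₂ p,
        -(pdx w₁ p) * (pdx w₂ p) ^ 2;
     -(pdy w₁ p) ^ 3, (pdy w₂ p) ^ 3, -(pdy w₁ p) ^ 2 * pdy w₂ p,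
        (pdy w₁ p) * (pdy w₂ p) ^ 2;
     3 * (pdx w₁ p) ^ 2 * pdy w₁ p, -3 * (pdx w₂ p) ^ 2 * pdy w₂ p,
        (pdx w₁ p) ^ 2 * pdy w₂ p + 2 * pdx w₁ p * pdx w₂ p * pdy w₁ p,
        -(pdx w₂ p) ^ 2 * pdy w₁ p - 2 * pdx w₁ p * pdx w₂ p * pdy w₂ p;
     -3 * pdx w₁ p * (pdy w₁ p) ^ 2, 3 * pdx w₂ p * (pdy w₂ p) ^ 2,
        -(pdx w₂ p) * (pdy w₁ p) ^ 2 - 2 * pdx w₁ p * pdy w₁ p * pdy w₂ p,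
        (pdx w₁ p) * (pdy w₂ p) ^ 2 + 2 * pdx w₂ p * pdy w₁ p * pdy w₂ p]

/-- The column vector of the four GL(3) derivatives of the pair `(u₁,u₂)`. -/
def Vvec (u₁ u₂ : ℂ × ℂ → ℂ) (p : ℂ × ℂ) : Fin 4 → ℂ :=
  ![brX u₁ u₂ p, brY u₁ u₂ p, sqX u₁ u₂ p, sqY u₁ u₂ p]

/-!
The GL(3) derivatives of `u = (u₁, u₂)` at `p` are, up to sign, the coefficients of the binary cubic
form `h ↦ det (u'(p) h, u''(p)(h, h)) / J(u₁, u₂)(p)`. Let `v` be the inverse of `w = (w₁, w₂)`.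
Differentiating `v ∘ w = id` twice gives `v' (w''(h, h)) = -v''(w' h, w' h)`, so applying `v'` to
both columns of `det (w' h, w''(h, h))` multiplies it by `det v' = 1 / D` and turns it into minus
the same determinant for `v` in the direction `w' h`. Hence the cubic form of `w` is `-1 / D`
times that of `v` after the substitution `h ↦ w' h`, and `M(w₁, w₂; x, y)` is the action of this
substitution on the coefficients of a binary cubic.

That a holomorphic map of several variables is smooth comes from the Schwarz lemma alone: it gives
Cauchy's inequality, hence Weierstrass' theorem on uniform limits of holomorphic maps, and it makes
the difference quotients converge locally uniformly to the directional derivative, which is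
therefore holomorphic again.
-/

section Holomorphic

open Filter Metric Set Topology

theorem mapsTo_closedBall_of_norm_le {α F : Type*} [PseudoMetricSpace α] [SeminormedAddCommGroup F]
    {f : α → F} {p : α} {r C : ℝ} (hr : 0 < r) (hC : ∀ z ∈ ball p r, ‖f z‖ ≤ C) :
    MapsTo f (ball p r) (closedBall (f p) (2 * C)) := fun z hz => by
  rw [mem_closedBall, dist_eq_norm]
  linarith [norm_sub_le (f z) (f p), hC z hz, hC p (mem_ball_self hr)]

variable {E F : Type*} [NormedAddCommGroup E] [NormedSpace ℂ E] [NormedAddCommGroup F]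
  [NormedSpace ℂ F] {U V : Set E} {f : E → F} {p v : E} {r C : ℝ}

theorem norm_fderiv_le_of_norm_le_on_ball (hf : DifferentiableOn ℂ f (ball p r)) (hr : 0 < r)
    (hC : ∀ z ∈ ball p r, ‖f z‖ ≤ C) : ‖fderiv ℂ f p‖ ≤ 2 * C / r :=
  norm_fderiv_le_div_of_mapsTo_ball hf (mapsTo_closedBall_of_norm_le hr hC) hr

theorem uniformCauchySeqOn_fderiv {ι : Type*} {l : Filter ι} {f : ι → E → F} (hr : 0 < r)
    (hsub : ∀ z ∈ V, ball z r ⊆ U) (hU : IsOpen U) (hf : ∀ᶠ n in l, DifferentiableOn ℂ (f n) U)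
    (hfU : UniformCauchySeqOn f l U) : UniformCauchySeqOn (fun n => fderiv ℂ (f n)) l V := by
  intro u hu
  obtain ⟨ε, hε, hεu⟩ := mem_uniformity_dist.1 hu
  filter_upwards [hfU _ (dist_mem_uniformity (show 0 < ε * r / 4 by positivity)),
    hf.prod_mk hf] with ⟨m, n⟩ hmn ⟨hm, hn⟩ z hz
  have hzU : z ∈ U := hsub z hz (mem_ball_self hr)
  apply hεu
  rw [dist_eq_norm, ← fderiv_sub (hm.differentiableAt (hU.mem_nhds hzU))
    (hn.differentiableAt (hU.mem_nhds hzU))]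
  calc ‖fderiv ℂ (f m - f n) z‖
      ≤ 2 * (ε * r / 4) / r :=
        norm_fderiv_le_of_norm_le_on_ball ((hm.sub hn).mono (hsub z hz)) hr fun w hw => by
          simpa [dist_eq_norm] using (hmn w (hsub z hz hw)).le
    _ = ε / 2 := by field_simp; norm_num
    _ < ε := half_lt_self hε

theorem differentiableOn_of_tendstoUniformlyOn [CompleteSpace F] {ι : Type*} {l : Filter ι}
    [l.NeBot] {f : ι → E → F} {g : E → F} (hU : IsOpen U)
    (hf : ∀ᶠ n in l, DifferentiableOn ℂ (f n) U) (hfg : TendstoUniformlyOn f g l U) :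
    DifferentiableOn ℂ g U := by
  intro p hp
  obtain ⟨r, hr, hball⟩ := isOpen_iff.1 hU p hp
  have hsub : ∀ z ∈ ball p (r / 2), ball z (r / 2) ⊆ U := fun z hz =>
    (ball_subset_ball' (by linarith [mem_ball.1 hz])).trans hball
  have hcauchy := uniformCauchySeqOn_fderiv (half_pos hr) hsub hU hf hfg.uniformCauchySeqOn
  choose! g' hg' using fun z (hz : z ∈ ball p (r / 2)) =>
    cauchy_map_iff_exists_tendsto.1 (hcauchy.cauchy_map hz)
  have hlim : TendstoUniformlyOn (fun n => fderiv ℂ (f n)) g' l (ball p (r / 2)) :=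
    hcauchy.tendstoUniformlyOn_of_tendsto hg'
  have hVp : ball p (r / 2) ∈ 𝓝 p := ball_mem_nhds p (half_pos hr)
  have hmem : ∀ z ∈ ball p (r / 2), z ∈ U := fun z hz => hsub z hz (mem_ball_self (half_pos hr))
  have hderiv : ∀ᶠ q : ι × E in l ×ˢ 𝓝 p, HasFDerivAt (f q.1) (fderiv ℂ (f q.1) q.2) q.2 := by
    filter_upwards [hf.prod_mk hVp] with q hq
    exact (hq.1.differentiableAt (hU.mem_nhds (hmem _ hq.2))).hasFDerivAt
  have hpointwise : ∀ᶠ z in 𝓝 p, Tendsto (f · z) l (𝓝 (g z)) := by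
    filter_upwards [hVp] with z hz using hfg.tendsto_at (hmem z hz)
  exact (hasFDerivAt_of_tendstoUniformlyOnFilter
    (hlim.tendstoUniformlyOnFilter.mono_right (le_principal_iff.2 hVp))
    hderiv hpointwise).differentiableAt.differentiableWithinAt

theorem norm_dslope_sub_deriv_le [CompleteSpace F] {φ : ℂ → F} {c h : ℂ}
    (hφ : DifferentiableOn ℂ φ (ball c r)) (hC : ∀ z ∈ ball c r, ‖φ z‖ ≤ C) (hh : h ∈ ball c r) :
    ‖dslope φ c h - deriv φ c‖ ≤ 2 * (2 * C / r) / r * ‖h - c‖ := by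
  have hr : 0 < r := nonempty_ball.1 ⟨h, hh⟩
  have hslope : DifferentiableOn ℂ (dslope φ c) (ball c r) :=
    (Complex.differentiableOn_dslope (ball_mem_nhds c hr)).2 hφ
  have hbound : ∀ z ∈ ball c r, ‖dslope φ c z‖ ≤ 2 * C / r := fun z hz =>
    norm_dslope_le_div_of_mapsTo_ball hφ (mapsTo_closedBall_of_norm_le hr hC) hz
  simpa [dist_eq_norm] using
    dist_le_div_mul_dist_of_mapsTo_ball hslope (mapsTo_closedBall_of_norm_le hr hbound) hh

theorem tendstoUniformlyOn_differenceQuotient [CompleteSpace F] (hr : 0 < r)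
    (hmem : ∀ z ∈ V, ∀ h ∈ ball (0 : ℂ) r, z + h • v ∈ U) (hU : IsOpen U)
    (hf : DifferentiableOn ℂ f U) (hC : ∀ z ∈ U, ‖f z‖ ≤ C) :
    TendstoUniformlyOn (fun (h : ℂ) z => h⁻¹ • (f (z + h • v) - f z))
      (fun z => fderiv ℂ f z v) (𝓝[≠] 0) V := by
  rw [Metric.tendstoUniformlyOn_iff]
  intro ε hε
  have hlim : Tendsto (fun h : ℂ => 2 * (2 * C / r) / r * ‖h‖) (𝓝[≠] 0) (𝓝 0) :=
    (Continuous.tendsto' (by fun_prop) 0 0 (by simp)).mono_left nhdsWithin_le_nhds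
  filter_upwards [hlim.eventually_lt_const hε, self_mem_nhdsWithin,
    nhdsWithin_le_nhds (ball_mem_nhds 0 hr)] with h hhε hne hhr z hz
  have hline : ∀ t ∈ ball (0 : ℂ) r,
      HasDerivAt (fun t : ℂ => f (z + t • v)) (fderiv ℂ f (z + t • v) v) t := fun t ht =>
    (hf.differentiableAt (hU.mem_nhds (hmem z hz t ht))).hasFDerivAt.comp_hasDerivAt t
      (by simpa using ((hasDerivAt_id t).smul_const v).const_add z)
  have hslope := norm_dslope_sub_deriv_le
    (fun t ht => (hline t ht).differentiableAt.differentiableWithinAt)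
    (fun t ht => hC _ (hmem z hz t ht)) hhr
  rw [dslope_of_ne _ hne, slope_def_module, (hline 0 (mem_ball_self hr)).deriv] at hslope
  rw [dist_comm, dist_eq_norm]
  exact lt_of_le_of_lt (by simpa using hslope) hhε

theorem differentiableOn_fderiv_apply [CompleteSpace F] (hU : IsOpen U)
    (hf : DifferentiableOn ℂ f U) (v : E) : DifferentiableOn ℂ (fun z => fderiv ℂ f z v) U := by
  intro p hp
  set W : Set E := U ∩ f ⁻¹' ball 0 (‖f p‖ + 1)
  have hWo : IsOpen W := hf.continuousOn.isOpen_inter_preimage hU isOpen_ball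
  have hpW : p + (0 : ℂ) • v ∈ W := by simp [W, hp]
  have hmem : ∀ᶠ q : E × ℂ in 𝓝 p ×ˢ 𝓝 0, q.1 + q.2 • v ∈ W := by
    rw [← nhds_prod_eq]
    exact ContinuousAt.preimage_mem_nhds (f := fun q : E × ℂ => q.1 + q.2 • v)
      (by fun_prop) (hWo.mem_nhds hpW)
  obtain ⟨⟨V, r⟩, ⟨⟨hpV, hV⟩, hr⟩, hsub⟩ :=
    ((nhds_basis_opens p).prod nhds_basis_ball).mem_iff.1 hmem
  have hVW : ∀ z ∈ V, ∀ h ∈ ball (0 : ℂ) r, z + h • v ∈ W := fun z hz h hh =>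
    hsub (mk_mem_prod hz hh)
  have hfW : DifferentiableOn ℂ f W := hf.mono inter_subset_left
  have hlim := tendstoUniformlyOn_differenceQuotient hr hVW hWo hfW
    fun z hz => (mem_ball_zero_iff.1 hz.2).le
  refine ((differentiableOn_of_tendstoUniformlyOn hV ?_ hlim).differentiableAt
    (hV.mem_nhds hpV)).differentiableWithinAt
  filter_upwards [nhdsWithin_le_nhds (ball_mem_nhds 0 hr)] with h hh
  have hVsub : V ⊆ W := fun z hz => by simpa using hVW z hz 0 (mem_ball_self hr)
  exact ((hfW.comp (by fun_prop) fun z hz => hVW z hz h hh).sub (hfW.mono hVsub)).const_smul _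

theorem contDiffOn_nat_of_isOpen_of_differentiableOn [CompleteSpace F] [FiniteDimensional ℂ E]
    (hU : IsOpen U) (hf : DifferentiableOn ℂ f U) (n : ℕ) : ContDiffOn ℂ n f U := by
  induction n generalizing f with
  | zero => exact contDiffOn_zero.2 hf.continuousOn
  | succ n ih =>
    rw [Nat.cast_succ, contDiffOn_succ_iff_fderiv_apply hU.uniqueDiffOn]
    refine ⟨hf, by simp, fun v => (ih (differentiableOn_fderiv_apply hU hf v)).congr fun z hz => ?_⟩
    rw [fderivWithin_of_isOpen hU hz]

theorem contDiffAt_of_isOpen_of_differentiableOn [CompleteSpace F] [FiniteDimensional ℂ E]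
    (hU : IsOpen U) (hf : DifferentiableOn ℂ f U) (hp : p ∈ U) {n : ℕ∞} : ContDiffAt ℂ n f p :=
  ((contDiffOn_infty.2 (contDiffOn_nat_of_isOpen_of_differentiableOn hU hf)).contDiffAt
    (hU.mem_nhds hp)).of_le (mod_cast le_top)

end Holomorphic

section SecondDerivative

open Filter Topology

variable {𝕜 : Type*} [NontriviallyNormedField 𝕜] {E F G : Type*} [NormedAddCommGroup E]
  [NormedSpace 𝕜 E] [NormedAddCommGroup F] [NormedSpace 𝕜 F] [NormedAddCommGroup G]
  [NormedSpace 𝕜 G] {f : E → F} {p : E}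

theorem differentiableAt_fderiv_of_contDiffAt_two (hf : ContDiffAt 𝕜 2 f p) :
    DifferentiableAt 𝕜 (fderiv 𝕜 f) p :=
  (hf.fderiv_right (m := 1) le_rfl).differentiableAt one_ne_zero

theorem eventually_differentiableAt_of_contDiffAt_two (hf : ContDiffAt 𝕜 2 f p) :
    ∀ᶠ z in 𝓝 p, DifferentiableAt 𝕜 f z :=
  (hf.eventually (by simp)).mono fun _ hz => hz.differentiableAt two_ne_zero

theorem fderiv_fderiv_apply_const (hf : DifferentiableAt 𝕜 (fderiv 𝕜 f) p) (h k : E) :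
    fderiv 𝕜 (fun z => fderiv 𝕜 f z k) p h = fderiv 𝕜 (fderiv 𝕜 f) p h k := by
  simp [fderiv_clm_apply hf (differentiableAt_const k)]

theorem fderiv_fderiv_comp {g : F → G} (hg : ContDiffAt 𝕜 2 g (f p)) (hf : ContDiffAt 𝕜 2 f p)
    (h k : E) :
    fderiv 𝕜 (fderiv 𝕜 (g ∘ f)) p h k =
      fderiv 𝕜 (fderiv 𝕜 g) (f p) (fderiv 𝕜 f p h) (fderiv 𝕜 f p k) +
        fderiv 𝕜 g (f p) (fderiv 𝕜 (fderiv 𝕜 f) p h k) := by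
  have hfd : DifferentiableAt 𝕜 f p := hf.differentiableAt two_ne_zero
  have hgd := differentiableAt_fderiv_of_contDiffAt_two hg
  have hchain : fderiv 𝕜 (g ∘ f) =ᶠ[𝓝 p] fun z => (fderiv 𝕜 g (f z)).comp (fderiv 𝕜 f z) := by
    filter_upwards [eventually_differentiableAt_of_contDiffAt_two hf,
      hfd.continuousAt.eventually (eventually_differentiableAt_of_contDiffAt_two hg)] with z hfz hgz
    exact fderiv_comp z hgz hfz
  have hgf : DifferentiableAt 𝕜 (fun z => fderiv 𝕜 g (f z)) p := hgd.comp p hfd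
  rw [hchain.fderiv_eq, fderiv_clm_comp hgf (differentiableAt_fderiv_of_contDiffAt_two hf),
    fderiv_fun_comp p hgd hfd]
  simp [add_comm]

theorem fderiv_fderiv_prodMk {g : E → G} (hf : ContDiffAt 𝕜 2 f p) (hg : ContDiffAt 𝕜 2 g p)
    (h k : E) :
    fderiv 𝕜 (fderiv 𝕜 fun z => (f z, g z)) p h k =
      (fderiv 𝕜 (fderiv 𝕜 f) p h k, fderiv 𝕜 (fderiv 𝕜 g) p h k) := by
  have hf' := differentiableAt_fderiv_of_contDiffAt_two hf
  have hg' := differentiableAt_fderiv_of_contDiffAt_two hg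
  have hprod : (fun z => fderiv 𝕜 (fun z => (f z, g z)) z k) =ᶠ[𝓝 p]
      fun z => (fderiv 𝕜 f z k, fderiv 𝕜 g z k) := by
    filter_upwards [eventually_differentiableAt_of_contDiffAt_two hf,
      eventually_differentiableAt_of_contDiffAt_two hg] with z hfz hgz
    rw [hfz.fderiv_prodMk hgz]
    rfl
  rw [← fderiv_fderiv_apply_const (differentiableAt_fderiv_of_contDiffAt_two (hf.prodMk hg)),
    hprod.fderiv_eq, DifferentiableAt.fderiv_prodMk (by fun_prop) (by fun_prop)]
  simp [fderiv_fderiv_apply_const, hf', hg']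

variable {g : F → E}

theorem fderiv_apply_fderiv_of_eventually_leftInverse (hg : DifferentiableAt 𝕜 g (f p))
    (hf : DifferentiableAt 𝕜 f p) (hgf : ∀ᶠ z in 𝓝 p, g (f z) = z) (h : E) :
    fderiv 𝕜 g (f p) (fderiv 𝕜 f p h) = h := by
  have hid : g ∘ f =ᶠ[𝓝 p] id := hgf
  simpa [fderiv_comp p hg hf] using DFunLike.congr_fun (hid.fderiv_eq (𝕜 := 𝕜)) h

theorem fderiv_apply_fderiv_fderiv_of_eventually_leftInverse (hg : ContDiffAt 𝕜 2 g (f p))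
    (hf : ContDiffAt 𝕜 2 f p) (hgf : ∀ᶠ z in 𝓝 p, g (f z) = z) (h k : E) :
    fderiv 𝕜 g (f p) (fderiv 𝕜 (fderiv 𝕜 f) p h k) =
      -fderiv 𝕜 (fderiv 𝕜 g) (f p) (fderiv 𝕜 f p h) (fderiv 𝕜 f p k) := by
  have hid : g ∘ f =ᶠ[𝓝 p] id := hgf
  have hconst : fderiv 𝕜 (g ∘ f) =ᶠ[𝓝 p] fun _ => ContinuousLinearMap.id 𝕜 E := by
    filter_upwards [hid.eventuallyEq_nhds] with z hz
    rw [hz.fderiv_eq, fderiv_id]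
  rw [eq_neg_iff_add_eq_zero, add_comm, ← fderiv_fderiv_comp hg hf, hconst.fderiv_eq]
  simp

end SecondDerivative

section InflectionForm

open Filter Topology

/-- The exterior product of two vectors of the plane `R × R`, identified with a scalar: the
determinant of the matrix with columns `h` and `k`. -/
def wedge {R : Type*} [CommRing R] (h k : R × R) : R := h.1 * k.2 - h.2 * k.1

section Wedge

variable {R : Type*} [CommRing R]

theorem wedge_neg_right (h k : R × R) : wedge h (-k) = -wedge h k := by
  simp only [wedge, Prod.fst_neg, Prod.snd_neg]
  ring

theorem det_eq_wedge (L : R × R →ₗ[R] R × R) :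
    LinearMap.det L = wedge (L (1, 0)) (L (0, 1)) := by
  rw [← LinearMap.det_toMatrix (Module.Basis.finTwoProd R), det_fin_two]
  simp only [LinearMap.toMatrix_apply, Module.Basis.finTwoProd_zero, Module.Basis.finTwoProd_one,
    Module.Basis.coe_finTwoProd_repr, cons_val, wedge]
  ring

theorem wedge_map (L : R × R →ₗ[R] R × R) (h k : R × R) :
    wedge (L h) (L k) = LinearMap.det L * wedge h k := by
  have hL (h : R × R) : L h = h.1 • L (1, 0) + h.2 • L (0, 1) := by
    simp [← map_smul, ← map_add]
  rw [det_eq_wedge, hL h, hL k]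
  simp only [wedge, Prod.fst_add, Prod.snd_add, Prod.smul_fst, Prod.smul_snd, smul_eq_mul]
  ring

end Wedge

variable {𝕜 : Type*} [NontriviallyNormedField 𝕜]

/-- The inflection form of a plane-valued map `u` at `p`, a cubic form in the direction `h`: it
vanishes when the image under `u` of the line through `p` in the direction `h` has an inflection
at `u p`. It is not normalised by the Jacobian determinant, so that it needs no division. -/
def inflectionForm {E : Type*} [NormedAddCommGroup E] [NormedSpace 𝕜 E] (u : E → 𝕜 × 𝕜) (p h : E) :
    𝕜 :=
  wedge (fderiv 𝕜 u p h) (fderiv 𝕜 (fderiv 𝕜 u) p h h)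

variable {u v : 𝕜 × 𝕜 → 𝕜 × 𝕜} {p : 𝕜 × 𝕜}

theorem det_fderiv_mul_det_fderiv_of_eventually_leftInverse (hv : DifferentiableAt 𝕜 v (u p))
    (hu : DifferentiableAt 𝕜 u p) (hvu : ∀ᶠ z in 𝓝 p, v (u z) = z) :
    (fderiv 𝕜 v (u p)).det * (fderiv 𝕜 u p).det = 1 := by
  have hcomp : (fderiv 𝕜 v (u p) : 𝕜 × 𝕜 →ₗ[𝕜] 𝕜 × 𝕜) ∘ₗ (fderiv 𝕜 u p) = LinearMap.id :=
    LinearMap.ext (fderiv_apply_fderiv_of_eventually_leftInverse hv hu hvu)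
  rw [ContinuousLinearMap.det, ContinuousLinearMap.det, ← LinearMap.det_comp, hcomp,
    LinearMap.det_id]

theorem det_fderiv_mul_inflectionForm_of_eventually_leftInverse (hv : ContDiffAt 𝕜 2 v (u p))
    (hu : ContDiffAt 𝕜 2 u p) (hvu : ∀ᶠ z in 𝓝 p, v (u z) = z) (h : 𝕜 × 𝕜) :
    (fderiv 𝕜 v (u p)).det * inflectionForm u p h =
      -inflectionForm v (u p) (fderiv 𝕜 u p h) := by
  set L : 𝕜 × 𝕜 →L[𝕜] 𝕜 × 𝕜 := fderiv 𝕜 v (u p)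
  calc L.det * inflectionForm u p h
      = wedge (L (fderiv 𝕜 u p h)) (L (fderiv 𝕜 (fderiv 𝕜 u) p h h)) :=
        (wedge_map (L : 𝕜 × 𝕜 →ₗ[𝕜] 𝕜 × 𝕜) _ _).symm
    _ = -wedge (L (fderiv 𝕜 u p h))
          (fderiv 𝕜 (fderiv 𝕜 v) (u p) (fderiv 𝕜 u p h) (fderiv 𝕜 u p h)) := by
        rw [fderiv_apply_fderiv_fderiv_of_eventually_leftInverse hv hu hvu, wedge_neg_right]
    _ = -inflectionForm v (u p) (fderiv 𝕜 u p h) := rfl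

end InflectionForm

section BinaryCubic

variable {R : Type*} [CommRing R]

/-- The binary cubic form in `h = (s, t)` with coefficient vector `v`. The order
`s³, -t³, s²t, -st²` of the monomials is the one for which the column of GL(3) derivatives is the
coefficient vector of the inflection form divided by the Jacobian. -/
def binaryCubic (v : Fin 4 → R) (h : R × R) : R :=
  v 0 * h.1 ^ 3 - v 1 * h.2 ^ 3 + v 2 * (h.1 ^ 2 * h.2) - v 3 * (h.1 * h.2 ^ 2)

theorem binaryCubic_smul (c : R) (v : Fin 4 → R) (h : R × R) :
    binaryCubic (c • v) h = c * binaryCubic v h := by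
  simp only [binaryCubic, Pi.smul_apply, smul_eq_mul]
  ring

theorem binaryCubic_injective [NoZeroDivisors R] [NeZero (2 : R)] :
    Function.Injective (binaryCubic (R := R)) := by
  intro v v' hvv'
  have h (s t : R) : binaryCubic v (s, t) = binaryCubic v' (s, t) := congrFun hvv' (s, t)
  simp only [binaryCubic] at h
  have h₀ : v 0 = v' 0 := by linear_combination h 1 0
  have h₁ : v 1 = v' 1 := by linear_combination -h 0 1
  have h₂ : v 2 = v' 2 := mul_left_cancel₀ (two_ne_zero (α := R)) (by
    linear_combination h 1 1 - h 1 (-1) + 2 * h₁)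
  have h₃ : v 3 = v' 3 := by linear_combination h₀ - h₁ + h₂ - h 1 1
  ext i
  fin_cases i <;> assumption

end BinaryCubic

section GL3

open Filter Topology

variable {f w₁ w₂ u₁ u₂ : ℂ × ℂ → ℂ} {p : ℂ × ℂ}

theorem pdx_eq_fderiv (hf : DifferentiableAt ℂ f p) : pdx f p = fderiv ℂ f p (1, 0) :=
  (hf.hasFDerivAt.comp_hasDerivAt (f := fun x => (x, p.2)) p.1
    ((hasDerivAt_id p.1).prodMk (hasDerivAt_const p.1 p.2))).deriv

theorem pdy_eq_fderiv (hf : DifferentiableAt ℂ f p) : pdy f p = fderiv ℂ f p (0, 1) :=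
  (hf.hasFDerivAt.comp_hasDerivAt (f := fun y => (p.1, y)) p.2
    ((hasDerivAt_const p.2 p.1).prodMk (hasDerivAt_id p.2))).deriv

theorem fderiv_apply_eq_pdx_pdy (hf : DifferentiableAt ℂ f p) (h : ℂ × ℂ) :
    fderiv ℂ f p h = h.1 * pdx f p + h.2 * pdy f p := by
  rw [pdx_eq_fderiv hf, pdy_eq_fderiv hf, ← smul_eq_mul, ← smul_eq_mul, ← map_smul, ← map_smul,
    ← map_add]
  simp

theorem fderiv_fderiv_apply_self (hf : ContDiffAt ℂ 2 f p) (h : ℂ × ℂ) :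
    fderiv ℂ (fderiv ℂ f) p h h = pdx (pdx f) p * h.1 ^ 2 + 2 * pdx (pdy f) p * h.1 * h.2 +
      pdy (pdy f) p * h.2 ^ 2 := by
  have hd := differentiableAt_fderiv_of_contDiffAt_two hf
  have hsymm : IsSymmSndFDerivAt ℂ f p := hf.isSymmSndFDerivAt (by simp)
  have hx : pdx f =ᶠ[𝓝 p] fun z => fderiv ℂ f z (1, 0) :=
    (eventually_differentiableAt_of_contDiffAt_two hf).mono fun _ => pdx_eq_fderiv
  have hy : pdy f =ᶠ[𝓝 p] fun z => fderiv ℂ f z (0, 1) :=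
    (eventually_differentiableAt_of_contDiffAt_two hf).mono fun _ => pdy_eq_fderiv
  have hdx : DifferentiableAt ℂ (pdx f) p := hx.differentiableAt_iff.2 (by fun_prop)
  have hdy : DifferentiableAt ℂ (pdy f) p := hy.differentiableAt_iff.2 (by fun_prop)
  rw [pdx_eq_fderiv hdx, pdx_eq_fderiv hdy, pdy_eq_fderiv hdy, hx.fderiv_eq, hy.fderiv_eq,
    fderiv_fderiv_apply_const hd, fderiv_fderiv_apply_const hd, fderiv_fderiv_apply_const hd]
  have hh : h = h.1 • (1, 0) + h.2 • (0, 1) := by simp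
  have hxy := hsymm (1, 0) (0, 1)
  generalize fderiv ℂ (fderiv ℂ f) p = B at *
  conv_lhs => rw [hh]
  simp only [map_add, map_smul, _root_.add_apply, _root_.smul_apply, smul_eq_mul]
  linear_combination -(h.1 * h.2) * hxy

theorem det_fderiv_prodMk (hu₁ : DifferentiableAt ℂ u₁ p) (hu₂ : DifferentiableAt ℂ u₂ p) :
    (fderiv ℂ (fun z => (u₁ z, u₂ z)) p).det = Jac u₁ u₂ p := by
  rw [ContinuousLinearMap.det, det_eq_wedge, hu₁.fderiv_prodMk hu₂, Jac,
    pdx_eq_fderiv hu₁, pdx_eq_fderiv hu₂, pdy_eq_fderiv hu₁, pdy_eq_fderiv hu₂]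
  rfl

theorem binaryCubic_Vvec (hu₁ : ContDiffAt ℂ 2 u₁ p) (hu₂ : ContDiffAt ℂ 2 u₂ p) (h : ℂ × ℂ) :
    binaryCubic (Vvec u₁ u₂ p) h = inflectionForm (fun z => (u₁ z, u₂ z)) p h / Jac u₁ u₂ p := by
  have hd₁ := hu₁.differentiableAt two_ne_zero
  have hd₂ := hu₂.differentiableAt two_ne_zero
  rw [inflectionForm, fderiv_fderiv_prodMk hu₁ hu₂, hd₁.fderiv_prodMk hd₂]
  simp only [binaryCubic, Vvec, brX, brY, sqX, sqY, wedge, ContinuousLinearMap.prod_apply,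
    fderiv_apply_eq_pdx_pdy hd₁, fderiv_apply_eq_pdx_pdy hd₂, fderiv_fderiv_apply_self hu₁,
    fderiv_fderiv_apply_self hu₂, cons_val]
  ring

theorem binaryCubic_Mmat_mulVec (hw₁ : DifferentiableAt ℂ w₁ p) (hw₂ : DifferentiableAt ℂ w₂ p)
    (v : Fin 4 → ℂ) (h : ℂ × ℂ) :
    binaryCubic (Mmat w₁ w₂ p *ᵥ v) h =
      binaryCubic v (fderiv ℂ (fun z => (w₁ z, w₂ z)) p h) := by
  rw [hw₁.fderiv_prodMk hw₂]
  simp only [binaryCubic, Mmat, mulVec, dotProduct, Fin.sum_univ_four, of_apply, cons_val,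
    ContinuousLinearMap.prod_apply, fderiv_apply_eq_pdx_pdy hw₁, fderiv_apply_eq_pdx_pdy hw₂]
  ring

theorem statement3_general {x y : ℂ × ℂ → ℂ} (hw₁ : ContDiffAt ℂ 2 w₁ p)
    (hw₂ : ContDiffAt ℂ 2 w₂ p) (hx : ContDiffAt ℂ 2 x (w₁ p, w₂ p))
    (hy : ContDiffAt ℂ 2 y (w₁ p, w₂ p))
    (hinv : ∀ᶠ z in 𝓝 p, (x (w₁ z, w₂ z), y (w₁ z, w₂ z)) = z) :
    Vvec w₁ w₂ p = -((Jac w₁ w₂ p)⁻¹ • (Mmat w₁ w₂ p *ᵥ Vvec x y (w₁ p, w₂ p))) := by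
  set w : ℂ × ℂ → ℂ × ℂ := fun z => (w₁ z, w₂ z)
  set g : ℂ × ℂ → ℂ × ℂ := fun z => (x z, y z)
  have hdw₁ := hw₁.differentiableAt two_ne_zero
  have hdw₂ := hw₂.differentiableAt two_ne_zero
  have hdx := hx.differentiableAt two_ne_zero
  have hdy := hy.differentiableAt two_ne_zero
  have hJ := det_fderiv_mul_det_fderiv_of_eventually_leftInverse (u := w) (v := g) (hdx.prodMk hdy)
    (hdw₁.prodMk hdw₂) hinv
  have hform := det_fderiv_mul_inflectionForm_of_eventually_leftInverse (u := w) (v := g)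
    (hx.prodMk hy) (hw₁.prodMk hw₂) hinv
  rw [det_fderiv_prodMk hdx hdy, det_fderiv_prodMk hdw₁ hdw₂] at hJ
  rw [det_fderiv_prodMk hdx hdy] at hform
  refine binaryCubic_injective (funext fun h => ?_)
  rw [← neg_smul, binaryCubic_smul, binaryCubic_Mmat_mulVec hdw₁ hdw₂, binaryCubic_Vvec hw₁ hw₂,
    binaryCubic_Vvec hx hy]
  have hJx : Jac x y (w₁ p, w₂ p) ≠ 0 := left_ne_zero_of_mul_eq_one hJ
  have hJw : Jac w₁ w₂ p ≠ 0 := right_ne_zero_of_mul_eq_one hJ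
  field_simp
  linear_combination hform h

end GL3

/-- Exchange of the first and second arguments: the GL(3) derivatives
of a biholomorphism are expressed through those of its inverse via `−(1/D)·M`. -/
theorem statement3 (Ω Ω' : Set (ℂ × ℂ)) (hΩ : IsOpen Ω) (hΩ' : IsOpen Ω')
    (w₁ w₂ x y : ℂ × ℂ → ℂ)
    (hw₁ : DifferentiableOn ℂ w₁ Ω) (hw₂ : DifferentiableOn ℂ w₂ Ω)
    (hx : DifferentiableOn ℂ x Ω') (hy : DifferentiableOn ℂ y Ω')
    (hmaps : ∀ p ∈ Ω, (w₁ p, w₂ p) ∈ Ω')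
    (hmaps' : ∀ q ∈ Ω', (x q, y q) ∈ Ω)
    (hleft : ∀ p ∈ Ω, (x (w₁ p, w₂ p), y (w₁ p, w₂ p)) = p)
    (hright : ∀ q ∈ Ω', (w₁ (x q, y q), w₂ (x q, y q)) = q)
    (hJw : ∀ p ∈ Ω, Jac w₁ w₂ p ≠ 0)
    (hJxy : ∀ q ∈ Ω', Jac x y q ≠ 0) :
    ∀ p ∈ Ω,
      Vvec w₁ w₂ p =
        -((Jac w₁ w₂ p)⁻¹ • (Mmat w₁ w₂ p *ᵥ Vvec x y (w₁ p, w₂ p))) := by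
  intro p hp
  have hq := hmaps p hp
  exact statement3_general (contDiffAt_of_isOpen_of_differentiableOn hΩ hw₁ hp)
    (contDiffAt_of_isOpen_of_differentiableOn hΩ hw₂ hp)
    (contDiffAt_of_isOpen_of_differentiableOn hΩ' hx hq)
    (contDiffAt_of_isOpen_of_differentiableOn hΩ' hy hq)
    (Filter.eventually_of_mem (hΩ.mem_nhds hp) hleft)
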